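/- Let R > 0, let U = B(0,R) be the open ball in ℂ, let f : ℂ → ℂ be analytic and nonzero at every point of U with f(0) = 1, and let g be analytic on U with exp(g(w)) = f(w) for all w ∈ U and g(0) = 0. For k ≥ 1 set c_k = g^{(k)}(0)/k!. Fix an integer k ≥ 1 and z ∈ U, and for real r > 1 form the geometric sampling products with common ratio r for every index. Then lim_{r→1⁺} Q(f, F*_{max=k}, z) = exp(c_k · z^k); that is, the limit as r ↓ 1 of ∏_{S ⊆ {1,…,k}, k ∈ S} P(f, S, z)^{(−1)^{|S|−1}} equals the k-th function factor f_k(z) = exp(c_k z^k) of f. (Isolating one function component factor.) -/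

import Mathlib

open Topology

/-- Geometric sampling point with real ratio `r > 1`:
`X_{k,n}(r) = (r^k - 1)^{1/k} / r^n`, positive real `k`-th root. -/
noncomputable def Xr (k n : ℕ) (r : ℝ) : ℂ :=
  (((r ^ k - 1) ^ ((k : ℝ))⁻¹ : ℝ) : ℂ) / (r : ℂ) ^ n

/-- Geometric sampling product `P(f, S, z)` with common real ratio `r`. -/
noncomputable def P (f : ℂ → ℂ) (r : ℝ) (S : Finset ℕ) (z : ℂ) : ℂ :=
  ∏' ν : {x // x ∈ S} → ℕ+, f ((∏ k : {x // x ∈ S}, Xr k.1 (ν k : ℕ) r) * z)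

/-- Geometric sampling quotient `Q(f, F, z) = ∏_{S ∈ F} P(f,S,z)^{(-1)^{|S|-1}}`. -/
noncomputable def Q (f : ℂ → ℂ) (r : ℝ) (F : Finset (Finset ℕ)) (z : ℂ) : ℂ :=
  ∏ S ∈ F, P f r S z ^ ((-1 : ℤ) ^ (S.card + 1))

/-- `F*_{max = k}`: the family of subsets of `{1, …, k}` containing `k`. -/
def Fmax (k : ℕ) : Finset (Finset ℕ) :=
  ((Finset.Icc 1 k).powerset).filter (fun S => k ∈ S)

/-- The product of finitely many nonnegative convergent series, expanded over all index tuples. -/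
lemma hasSum_pi_prod_fin {β : Type*} (n : ℕ) (F : Fin n → β → ℝ) (s : Fin n → ℝ)
    (hF : ∀ i b, 0 ≤ F i b) (h : ∀ i, HasSum (F i) (s i)) :
    HasSum (fun ν : Fin n → β => ∏ i, F i (ν i)) (∏ i, s i) := by
  induction n with
  | zero => simp
  | succ n ih =>
    have hs := ih (fun i => F i.succ) (fun i => s i.succ) (fun i b => hF _ b) (fun i => h _)
    have hnn : ∀ ν : Fin n → β, 0 ≤ ∏ i : Fin n, F i.succ (ν i) :=
      fun ν => Finset.prod_nonneg fun i _ => hF _ _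
    have hsm := Summable.mul_of_nonneg (f := F 0)
      (g := fun ν : Fin n → β => ∏ i : Fin n, F i.succ (ν i))
      (h 0).summable hs.summable (hF 0) hnn
    have hm := HasSum.mul (f := F 0)
      (g := fun ν : Fin n → β => ∏ i : Fin n, F i.succ (ν i)) (h 0) hs hsm
    rw [← (Fin.consEquiv (fun _ : Fin (n + 1) => β)).hasSum_iff, Fin.prod_univ_succ]
    have e : (fun ν : Fin (n + 1) → β => ∏ i, F i (ν i)) ∘ Fin.consEquiv (fun _ => β) =
        fun p : β × (Fin n → β) => F 0 p.1 * ∏ i : Fin n, F i.succ (p.2 i) := by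
      funext p
      simp [Fin.consEquiv, Fin.prod_univ_succ]
    rw [e]
    exact hm

lemma hasSum_pi_prod {ι β : Type*} [Fintype ι] (F : ι → β → ℝ) (s : ι → ℝ)
    (hF : ∀ i b, 0 ≤ F i b) (h : ∀ i, HasSum (F i) (s i)) :
    HasSum (fun ν : ι → β => ∏ i, F i (ν i)) (∏ i, s i) := by
  have e := Fintype.equivFin ι
  have hs := hasSum_pi_prod_fin _ (fun i => F (e.symm i)) (fun i => s (e.symm i))
    (fun i b => hF _ b) (fun i => h _)
  rw [← (Equiv.arrowCongr e (Equiv.refl β)).hasSum_iff, e.symm.prod_comp s] at hs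
  convert hs with ν
  simp [Equiv.arrowCongr, e.symm.prod_comp (fun i => F i (ν i))]

/-- Summing values of a power series over a family of nonnegative points, by interchanging the
order of summation. -/
lemma hasSum_powerSeries_values {N : Type*} (a : ℕ → ℂ) (x : N → ℝ) (L : ℕ → ℝ) (φ : N → ℂ)
    (hx : ∀ ν, 0 ≤ x ν) (h : ∀ m, a m ≠ 0 → HasSum (fun ν => x ν ^ m) (L m))
    (hsum : Summable fun m => ‖a m‖ * L m)
    (hφ : ∀ ν, HasSum (fun m => a m * (x ν : ℂ) ^ m) (φ ν)) :
    HasSum φ (∑' m, a m * (L m : ℂ)) := by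
  have hnorm : ∀ m, HasSum (fun ν => ‖a m * (x ν : ℂ) ^ m‖) (‖a m‖ * L m) := by
    intro m
    by_cases ha : a m = 0
    · simp [ha, hasSum_zero]
    · have e : (fun ν => ‖a m * (x ν : ℂ) ^ m‖) = fun ν => ‖a m‖ * x ν ^ m := by
        funext ν
        simp [abs_of_nonneg (hx ν)]
      rw [e]
      exact (h m ha).mul_left ‖a m‖
  have hC : ∀ m, HasSum (fun ν => a m * (x ν : ℂ) ^ m) (a m * (L m : ℂ)) := by
    intro m
    by_cases ha : a m = 0
    · simp [ha, hasSum_zero]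
    · exact_mod_cast (Complex.hasSum_ofReal.mpr (h m ha)).mul_left (a m)
  have hS : Summable fun p : ℕ × N => a p.1 * (x p.2 : ℂ) ^ p.1 := by
    refine Summable.of_norm ((summable_prod_of_nonneg fun _ => norm_nonneg _).mpr
      ⟨fun m => (hnorm m).summable, ?_⟩)
    simpa only [(hnorm _).tsum_eq] using hsum
  have hT := hS.hasSum
  rw [(hT.prod_fiberwise hC).tsum_eq]
  exact ((Equiv.prodComm N ℕ).hasSum_iff.mpr hT).prod_fiberwise hφ

/-- The scaling factor of the sampling points of index `j`. -/
noncomputable def samplingScale (j : ℕ) (r : ℝ) : ℝ := (r ^ j - 1) ^ ((j : ℝ))⁻¹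

/-- The `m`-th power sum of the sampling points of index `j`. -/
noncomputable def samplingMoment (j m : ℕ) (r : ℝ) : ℝ := samplingScale j r ^ m / (r ^ m - 1)

lemma samplingScale_nonneg (j : ℕ) {r : ℝ} (hr : 1 < r) : 0 ≤ samplingScale j r :=
  Real.rpow_nonneg (sub_nonneg.mpr (one_le_pow₀ hr.le)) _

lemma samplingScale_pow {j : ℕ} (hj : j ≠ 0) {r : ℝ} (hr : 1 < r) :
    samplingScale j r ^ j = r ^ j - 1 :=
  Real.rpow_inv_natCast_pow (sub_nonneg.mpr (one_le_pow₀ hr.le)) hj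

lemma samplingScale_lt {j : ℕ} (hj : j ≠ 0) {r : ℝ} (hr : 1 < r) : samplingScale j r < r := by
  refine lt_of_pow_lt_pow_left₀ j (by linarith) ?_
  rw [samplingScale_pow hj hr]
  linarith

lemma tendsto_samplingScale {j : ℕ} (hj : j ≠ 0) :
    Filter.Tendsto (samplingScale j) (𝓝[>] (1 : ℝ)) (𝓝 0) := by
  have hj' : (0 : ℝ) < (j : ℝ)⁻¹ := by positivity
  have hc : Continuous (samplingScale j) :=
    Continuous.rpow_const (by fun_prop) (fun _ => Or.inr hj'.le)
  have h0 : samplingScale j 1 = 0 := by simp [samplingScale, hj]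
  exact h0 ▸ (hc.tendsto 1).mono_left nhdsWithin_le_nhds

lemma samplingMoment_nonneg (j m : ℕ) {r : ℝ} (hr : 1 < r) : 0 ≤ samplingMoment j m r :=
  div_nonneg (pow_nonneg (samplingScale_nonneg j hr) _) (sub_nonneg.mpr (one_le_pow₀ hr.le))

lemma samplingMoment_self {j : ℕ} (hj : j ≠ 0) {r : ℝ} (hr : 1 < r) :
    samplingMoment j j r = 1 := by
  rw [samplingMoment, samplingScale_pow hj hr,
    div_self (sub_pos.mpr (one_lt_pow₀ hr hj)).ne']

lemma samplingMoment_le_scale_pow {j m : ℕ} (hj : j ≠ 0) (hjm : j ≤ m) {r : ℝ} (hr : 1 < r) :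
    samplingMoment j m r ≤ samplingScale j r ^ (m - j) := by
  have hm : m ≠ 0 := by omega
  rw [samplingMoment, div_le_iff₀ (sub_pos.mpr (one_lt_pow₀ hr hm)),
    ← Nat.sub_add_cancel hjm, pow_add, samplingScale_pow hj hr, Nat.add_sub_cancel]
  gcongr
  · exact pow_nonneg (samplingScale_nonneg j hr) _
  · exact hr.le
  · omega

lemma samplingMoment_le_one {j m : ℕ} (hj : j ≠ 0) (hjm : j ≤ m) {r : ℝ} (hr : 1 < r) :
    samplingMoment j m r ≤ 1 := by
  have hm : m ≠ 0 := by omega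
  rw [samplingMoment, div_le_one (sub_pos.mpr (one_lt_pow₀ hr hm))]
  have h1 : samplingScale j r ^ (m - j) ≤ r ^ (m - j) :=
    pow_le_pow_left₀ (samplingScale_nonneg j hr) (samplingScale_lt hj hr).le _
  have h2 : (1 : ℝ) ≤ r ^ (m - j) := one_le_pow₀ hr.le
  have h3 : (1 : ℝ) ≤ r ^ j := one_le_pow₀ hr.le
  have e : m = (m - j) + j := by omega
  have e1 : samplingScale j r ^ m = samplingScale j r ^ (m - j) * (r ^ j - 1) := by
    rw [← samplingScale_pow hj hr, ← pow_add, ← e]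
  have e2 : r ^ m = r ^ (m - j) * r ^ j := by rw [← pow_add, ← e]
  rw [e1, e2]
  nlinarith

lemma tendsto_samplingMoment {j m : ℕ} (hj : j ≠ 0) (hjm : j < m) :
    Filter.Tendsto (samplingMoment j m) (𝓝[>] (1 : ℝ)) (𝓝 0) := by
  have h : Filter.Tendsto (fun r => samplingScale j r ^ (m - j)) (𝓝[>] (1 : ℝ)) (𝓝 0) := by
    simpa [zero_pow (Nat.sub_ne_zero_of_lt hjm)] using (tendsto_samplingScale hj).pow (m - j)
  refine squeeze_zero' ?_ ?_ h
  · filter_upwards [self_mem_nhdsWithin] with r hr using samplingMoment_nonneg j m hr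
  · filter_upwards [self_mem_nhdsWithin] with r hr using samplingMoment_le_scale_pow hj hjm.le hr

lemma hasSum_sampling_pow (j : ℕ) {m : ℕ} (hm : m ≠ 0) {r : ℝ} (hr : 1 < r) :
    HasSum (fun n : ℕ+ => (samplingScale j r / r ^ (n : ℕ)) ^ m) (samplingMoment j m r) := by
  have hrm : 1 < r ^ m := one_lt_pow₀ hr hm
  have hg := ((hasSum_geometric_of_lt_one (inv_nonneg.mpr (by linarith : (0 : ℝ) ≤ r ^ m))
    (inv_lt_one_of_one_lt₀ hrm)).mul_left (samplingScale j r ^ m * (r ^ m)⁻¹))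
  rw [← Equiv.pnatEquivNat.hasSum_iff] at hg
  have h2 : r ^ m ≠ 0 := by linarith
  have hL : samplingScale j r ^ m * (r ^ m)⁻¹ * (1 - (r ^ m)⁻¹)⁻¹ = samplingMoment j m r := by
    rw [samplingMoment, mul_assoc, ← mul_inv, mul_sub, mul_one, mul_inv_cancel₀ h2, div_eq_mul_inv]
  rw [hL] at hg
  have e : (fun n : ℕ+ => (samplingScale j r / r ^ (n : ℕ)) ^ m) =
      (fun i => samplingScale j r ^ m * (r ^ m)⁻¹ * (r ^ m)⁻¹ ^ i) ∘ Equiv.pnatEquivNat := by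
    funext n
    obtain ⟨n, rfl⟩ := Equiv.pnatEquivNat.symm.surjective n
    rw [Function.comp_apply, Equiv.apply_symm_apply, Equiv.pnatEquivNat_symm_apply,
      Nat.succPNat_coe, Nat.succ_eq_add_one]
    rw [mul_assoc, ← pow_succ', div_pow, ← pow_mul, mul_comm (n + 1) m, pow_mul, inv_pow,
      div_eq_mul_inv]
  rw [e]
  exact hg

/-- A sampling product of `f = exp ∘ g` is the exponential of the Taylor series of `g` weighted
by power sums of the sampling points. -/
lemma samplingProduct_eq_exp {R : ℝ} {f g : ℂ → ℂ}
    (hgf : ∀ w ∈ Metric.ball (0 : ℂ) R, Complex.exp (g w) = f w)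
    {z : ℂ} (hz : z ∈ Metric.ball (0 : ℂ) R) {c : ℕ → ℂ} (hc0 : c 0 = 0)
    (hc : ∀ w ∈ Metric.ball (0 : ℂ) R, HasSum (fun m => c m * w ^ m) (g w))
    {S : Finset ℕ} (hS : ∀ j ∈ S, j ≠ 0) {r : ℝ} (hr : 1 < r) :
    Summable (fun m => c m * z ^ m * ((∏ j ∈ S, samplingMoment j m r : ℝ) : ℂ)) ∧
    P f r S z =
      Complex.exp (∑' m, c m * z ^ m * ((∏ j ∈ S, samplingMoment j m r : ℝ) : ℂ)) := by
  have ha : Summable fun m => ‖c m * z ^ m‖ := (hc z hz).summable.norm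
  have hsum : Summable fun m => ‖c m * z ^ m‖ * ∏ j ∈ S, samplingMoment j m r := by
    refine ha.of_norm_bounded_eventually_nat ?_
    filter_upwards [Filter.eventually_ge_atTop (S.sup id)] with m hm
    rw [norm_mul, norm_norm, Real.norm_of_nonneg
      (Finset.prod_nonneg fun j _ => samplingMoment_nonneg j m hr)]
    refine mul_le_of_le_one_right (norm_nonneg _) (Finset.prod_le_one
      (fun j _ => samplingMoment_nonneg j m hr) fun j hj => ?_)
    exact samplingMoment_le_one (hS j hj) ((Finset.le_sup (f := id) hj).trans hm) hr
  refine ⟨Summable.of_norm (hsum.congr fun m => ?_), ?_⟩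
  · rw [norm_mul (c m * z ^ m), Complex.norm_real, Real.norm_of_nonneg
      (Finset.prod_nonneg fun j _ => samplingMoment_nonneg j m hr)]
  set x : ({j // j ∈ S} → ℕ+) → ℝ :=
    fun ν => ∏ j : {j // j ∈ S}, samplingScale j.1 r / r ^ (ν j : ℕ) with hxdef
  have hfac0 : ∀ (j : ℕ) (n : ℕ+), 0 ≤ samplingScale j r / r ^ (n : ℕ) := fun j n =>
    div_nonneg (samplingScale_nonneg j hr) (by positivity)
  have hx0 : ∀ ν, 0 ≤ x ν := fun ν => Finset.prod_nonneg fun j _ => hfac0 _ _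
  have hx1 : ∀ ν, x ν ≤ 1 := fun ν => Finset.prod_le_one (fun j _ => hfac0 _ _) fun j _ => by
    refine div_le_one_of_le₀ ((samplingScale_lt (hS j.1 j.2) hr).le.trans ?_) (by positivity)
    exact le_self_pow₀ hr.le (ν j).ne_zero
  have hxz : ∀ ν, (x ν : ℂ) * z ∈ Metric.ball (0 : ℂ) R := by
    intro ν
    rw [mem_ball_zero_iff] at hz ⊢
    rw [norm_mul, Complex.norm_real, Real.norm_of_nonneg (hx0 ν)]
    exact (mul_le_of_le_one_left (norm_nonneg _) (hx1 ν)).trans_lt hz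
  have key : HasSum (fun ν => g ((x ν : ℂ) * z))
      (∑' m, c m * z ^ m * ((∏ j ∈ S, samplingMoment j m r : ℝ) : ℂ)) := by
    refine hasSum_powerSeries_values _ x _ _ hx0 (fun m hm => ?_) hsum fun ν => ?_
    · have hm0 : m ≠ 0 := by rintro rfl; simp [hc0] at hm
      have := hasSum_pi_prod (fun (j : {j // j ∈ S}) (n : ℕ+) =>
        (samplingScale j.1 r / r ^ (n : ℕ)) ^ m) (fun j => samplingMoment j.1 m r)
        (fun j n => pow_nonneg (hfac0 _ _) _) (fun j => hasSum_sampling_pow j.1 hm0 hr)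
      rw [← Finset.prod_coe_sort]
      simpa only [hxdef, Finset.prod_pow] using this
    · convert hc _ (hxz ν) using 2 with m
      ring
  rw [P, ← key.cexp.tprod_eq]
  refine tprod_congr fun ν => ?_
  have e : (∏ j : {j // j ∈ S}, Xr j.1 (ν j : ℕ) r) = (x ν : ℂ) := by
    simp [hxdef, Xr, samplingScale]
  rw [e, ← hgf _ (hxz ν)]
  rfl

/-- Inclusion-exclusion over the subsets of `{1, …, k}` containing `k`. -/
lemma sum_Fmax_prod (k : ℕ) (hk : 1 ≤ k) (A : ℕ → ℂ) :
    ∑ S ∈ Fmax k, (-1 : ℂ) ^ (S.card + 1) * ∏ j ∈ S, A j =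
      A k * ∏ j ∈ Finset.Ico 1 k, (1 - A j) := by
  have hF : Fmax k = (Finset.Ico 1 k).powerset.image (insert k) := by
    ext S
    simp only [Fmax, Finset.mem_filter, Finset.mem_powerset, Finset.mem_image]
    constructor
    · rintro ⟨hS, hkS⟩
      refine ⟨S.erase k, fun j hj => ?_, Finset.insert_erase hkS⟩
      have h1 := Finset.mem_Icc.mp (hS (Finset.mem_of_mem_erase hj))
      have h2 := Finset.ne_of_mem_erase hj
      exact Finset.mem_Ico.mpr ⟨h1.1, by omega⟩
    · rintro ⟨T, hT, rfl⟩
      refine ⟨Finset.insert_subset (by simp [hk]) fun j hj => ?_, Finset.mem_insert_self _ _⟩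
      have h1 := Finset.mem_Ico.mp (hT hj)
      exact Finset.mem_Icc.mpr ⟨h1.1, h1.2.le⟩
  have hnot : ∀ T ∈ (Finset.Ico 1 k).powerset, k ∉ T := fun T hT hkT => by
    simpa using Finset.mem_powerset.mp hT hkT
  rw [hF, Finset.sum_image fun T hT T' hT' h => by
    rw [← Finset.erase_insert (hnot T hT), ← Finset.erase_insert (hnot T' hT'), h]]
  simp only [sub_eq_add_neg]
  rw [Finset.prod_one_add, Finset.mul_sum]
  refine Finset.sum_congr rfl fun T hT => ?_
  rw [Finset.card_insert_of_notMem (hnot T hT), Finset.prod_insert (hnot T hT),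
    Finset.prod_neg]
  ring

/-- Isolating one function component factor: with `f` analytic and nonzero on
`B(0,R)`, `f 0 = 1`, `g` an analytic logarithm of `f` on `B(0,R)` with `g 0 = 0`, and
`c_k = g^{(k)}(0)/k!`, for `k ≥ 1` and `z ∈ B(0,R)` one has
`lim_{r → 1⁺} Q(f, F*_{max=k}, z) = exp (c_k z^k)`, the `k`-th function factor of `f`. -/
theorem stmt_7 (R : ℝ) (hR : 0 < R) (f g : ℂ → ℂ)
    (hf : ∀ w ∈ Metric.ball (0 : ℂ) R, AnalyticAt ℂ f w)
    (hfne : ∀ w ∈ Metric.ball (0 : ℂ) R, f w ≠ 0)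
    (hf0 : f 0 = 1)
    (hg : ∀ w ∈ Metric.ball (0 : ℂ) R, AnalyticAt ℂ g w)
    (hgf : ∀ w ∈ Metric.ball (0 : ℂ) R, Complex.exp (g w) = f w)
    (hg0 : g 0 = 0)
    (k : ℕ) (hk : 1 ≤ k)
    (z : ℂ) (hz : z ∈ Metric.ball (0 : ℂ) R) :
    Filter.Tendsto (fun r : ℝ => Q f r (Fmax k) z) (𝓝[>] (1 : ℝ))
      (𝓝 (Complex.exp (iteratedDeriv k g 0 / (Nat.factorial k : ℂ) * z ^ k))) := by
  set c : ℕ → ℂ := fun m => iteratedDeriv m g 0 / (Nat.factorial m : ℂ) with hcdef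
  have hc0 : c 0 = 0 := by simp [hcdef, hg0]
  have hc : ∀ w ∈ Metric.ball (0 : ℂ) R, HasSum (fun m => c m * w ^ m) (g w) := by
    intro w hw
    have hd : DifferentiableOn ℂ g (Metric.ball 0 R) := fun u hu =>
      (hg u hu).differentiableAt.differentiableWithinAt
    have hT := Complex.hasSum_taylorSeries_on_ball hd hw
    have e : (fun m => c m * w ^ m) =
        fun m : ℕ => (m.factorial : ℂ)⁻¹ • (w - 0) ^ m • iteratedDeriv m g 0 := by
      funext m
      simp only [hcdef, sub_zero, smul_eq_mul]
      ring
    rw [e]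
    exact hT
  set B : ℕ → ℝ → ℝ := fun m r =>
    samplingMoment k m r * ∏ j ∈ Finset.Ico 1 k, (1 - samplingMoment j m r) with hB
  have hk0 : k ≠ 0 := by omega
  have hQ : ∀ r : ℝ, 1 < r →
      Q f r (Fmax k) z = Complex.exp (∑' m, c m * z ^ m * (B m r : ℂ)) := by
    intro r hr
    have hS : ∀ S ∈ Fmax k, ∀ j ∈ S, j ≠ 0 := by
      intro S hS j hj
      have := Finset.mem_Icc.mp (Finset.mem_powerset.mp (Finset.mem_filter.mp hS).1 hj)
      omega
    have hP := fun S (h : S ∈ Fmax k) => samplingProduct_eq_exp hgf hz hc0 hc (hS S h) hr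
    rw [Q, Finset.prod_congr rfl fun S h => by rw [(hP S h).2, ← Complex.exp_int_mul],
      ← Complex.exp_sum]
    congr 1
    simp only [← tsum_mul_left]
    rw [← Summable.tsum_finsetSum fun S h => (hP S h).1.mul_left _]
    refine tsum_congr fun m => ?_
    have := sum_Fmax_prod k hk (fun j => (samplingMoment j m r : ℂ))
    simp only [hB]
    push_cast
    rw [← this, Finset.mul_sum]
    refine Finset.sum_congr rfl fun S _ => ?_
    ring
  have hBlt : ∀ m r, m ≠ 0 → m < k → 1 < r → B m r = 0 := by
    intro m r hm hmk hr
    refine mul_eq_zero_of_right _ (Finset.prod_eq_zero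
      (Finset.mem_Ico.mpr ⟨Nat.one_le_iff_ne_zero.mpr hm, hmk⟩) ?_)
    rw [samplingMoment_self hm hr, sub_self]
  have hBle : ∀ m r, k ≤ m → 1 < r → ‖B m r‖ ≤ 1 := by
    intro m r hkm hr
    have hj : ∀ j ∈ Finset.Ico 1 k, 0 ≤ samplingMoment j m r ∧ samplingMoment j m r ≤ 1 := by
      intro j hj
      rw [Finset.mem_Ico] at hj
      exact ⟨samplingMoment_nonneg j m hr, samplingMoment_le_one (by omega) (by omega) hr⟩
    have h0 : 0 ≤ ∏ j ∈ Finset.Ico 1 k, (1 - samplingMoment j m r) :=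
      Finset.prod_nonneg fun j h => sub_nonneg.mpr (hj j h).2
    rw [Real.norm_of_nonneg (mul_nonneg (samplingMoment_nonneg k m hr) h0)]
    refine mul_le_one₀ (samplingMoment_le_one hk0 hkm hr) h0
      (Finset.prod_le_one (fun j h => sub_nonneg.mpr (hj j h).2) fun j h => ?_)
    linarith [(hj j h).1]
  have hprod : ∀ m, k ≤ m → Filter.Tendsto
      (fun r => ∏ j ∈ Finset.Ico 1 k, (1 - samplingMoment j m r)) (𝓝[>] (1 : ℝ)) (𝓝 1) := by
    intro m hkm
    have : Filter.Tendsto (fun r => ∏ j ∈ Finset.Ico 1 k, (1 - samplingMoment j m r))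
        (𝓝[>] (1 : ℝ)) (𝓝 (∏ j ∈ Finset.Ico 1 k, (1 - 0))) := by
      refine tendsto_finsetProd _ fun j hj => ?_
      rw [Finset.mem_Ico] at hj
      exact tendsto_const_nhds.sub (tendsto_samplingMoment (by omega) (by omega))
    simpa using this
  have hlim : ∀ m, Filter.Tendsto (fun r => c m * z ^ m * (B m r : ℂ)) (𝓝[>] (1 : ℝ))
      (𝓝 (if m = k then c k * z ^ k else 0)) := by
    intro m
    rcases lt_trichotomy m k with hmk | rfl | hkm
    · rw [if_neg hmk.ne]
      refine tendsto_const_nhds.congr' ?_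
      filter_upwards [self_mem_nhdsWithin] with r hr
      rcases eq_or_ne m 0 with rfl | hm
      · simp [hc0]
      · simp [hBlt m r hm hmk hr]
    · have h1 : Filter.Tendsto (B m) (𝓝[>] (1 : ℝ)) (𝓝 1) := by
        refine (hprod m le_rfl).congr' ?_
        filter_upwards [self_mem_nhdsWithin] with r hr
        simp [hB, samplingMoment_self hk0 hr]
      simpa using ((Complex.continuous_ofReal.tendsto 1).comp h1).const_mul (c m * z ^ m)
    · have h1 : Filter.Tendsto (B m) (𝓝[>] (1 : ℝ)) (𝓝 0) := by
        simpa using (tendsto_samplingMoment hk0 hkm).mul (hprod m hkm.le)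
      simpa [hkm.ne'] using
        ((Complex.continuous_ofReal.tendsto 0).comp h1).const_mul (c m * z ^ m)
  have hdom := tendsto_tsum_of_dominated_convergence (hc z hz).summable.norm hlim (by
    filter_upwards [self_mem_nhdsWithin] with r hr m
    rcases lt_or_ge m k with hmk | hkm
    · rcases eq_or_ne m 0 with rfl | hm
      · simp [hc0]
      · simp only [hBlt m r hm hmk hr, Complex.ofReal_zero, mul_zero, norm_zero]
        positivity
    · rw [norm_mul _ (B m r : ℂ), Complex.norm_real]
      exact mul_le_of_le_one_right (norm_nonneg _) (hBle m r hkm hr))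
  rw [tsum_ite_eq] at hdom
  refine ((Complex.continuous_exp.tendsto _).comp hdom).congr' ?_
  filter_upwards [self_mem_nhdsWithin] with r hr
  exact (hQ r hr).symm
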